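/- arXiv:2212.13943 — 2 statements merged into one kernel-verified Lean document; each statement's English description precedes it below -/
import Mathlib

section
/- Let Δv > 0 and let Q be a map sending each finitely supported sequence g : ℤ → ℝ to a finitely supported sequence Q(g) : ℤ → ℝ such that for every g: ∑_{j∈ℤ} Q(g)_j = 0, ∑_{j∈ℤ} v_j Q(g)_j = 0, and ∑_{j∈ℤ} v_j² Q(g)_j = 0. Let s ≥ 2 be an integer, η ≥ 0, Δt ∈ ℝ, and define ω₀ = 1 + η/s², ω₁ = T_s(ω₀)/T_s'(ω₀), μ₁ = ω₁/ω₀, and for 2 ≤ ℓ ≤ s: μ_ℓ = 2ω₁T_{ℓ−1}(ω₀)/T_ℓ(ω₀), ν_ℓ = 2ω₀T_{ℓ−1}(ω₀)/T_ℓ(ω₀), κ_ℓ = 1 − ν_ℓ, where T_k denotes the k-th Chebyshev polynomial of the first kind. Given a finitely supported f⁰ : ℤ → ℝ, define the RKC1 stages by K⁽⁰⁾ = f⁰, K⁽¹⁾ = K⁽⁰⁾ + μ₁Δt·Q(K⁽⁰⁾), and K⁽ℓ⁾ = κ_ℓK⁽ℓ⁻²⁾ + ν_ℓK⁽ℓ⁻¹⁾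 + μ_ℓΔt·Q(K⁽ℓ⁻¹⁾) for 2 ≤ ℓ ≤ s, and set f¹ = K⁽ˢ⁾. Then ∑_{j∈ℤ} f¹_j = ∑_{j∈ℤ} f⁰_j, ∑_{j∈ℤ} v_j f¹_j = ∑_{j∈ℤ} v_j f⁰_j, and ∑_{j∈ℤ} (v_j²/2) f¹_j = ∑_{j∈ℤ} (v_j²/2) f⁰_j. -/
noncomputable section

/-- Grid points `v_j = j·Δv`. -/
def vgrid (Δv : ℝ) (j : ℤ) : ℝ := j * Δv

/-- Evaluation of the `k`-th Chebyshev polynomial of the first kind. -/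
def chebT (k : ℕ) (x : ℝ) : ℝ := (Polynomial.Chebyshev.T ℝ k).eval x

/-- Evaluation of the derivative of the `k`-th Chebyshev polynomial of the first kind. -/
def chebT' (k : ℕ) (x : ℝ) : ℝ :=
  (Polynomial.derivative (Polynomial.Chebyshev.T ℝ k)).eval x

/-!
Since `κ ℓ + ν ℓ = 1`, every stage is an affine combination of earlier stages plus a multiple of
a value of `Q`. The values of `Q` lie in the subspace of finitely supported sequences with
vanishing moment, so all stages are congruent to the initial datum modulo this subspace.
-/

open Function

/-- The stages `K 0, …, K s` of a stabilized Runge–Kutta method for the vector field `Q`: an Euler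
step of length `τ₁`, then a three-term recurrence whose coefficients `κ ℓ` and `ν ℓ` sum to one.
The time step is absorbed into `τ₁` and `τ`. The method RKC1 is the case in which the coefficients
come from Chebyshev polynomials. -/
structure IsStabilizedRKStages {R M : Type*} [Ring R] [AddCommGroup M] [Module R M]
    (Q : M → M) (s : ℕ) (τ₁ : R) (κ ν τ : ℕ → R) (K : ℕ → M) : Prop where
  stage_one : K 1 = K 0 + τ₁ • Q (K 0)
  κ_eq : ∀ ℓ, 2 ≤ ℓ → ℓ ≤ s → κ ℓ = 1 - ν ℓ
  stage : ∀ ℓ, 2 ≤ ℓ → ℓ ≤ s →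
    K ℓ = κ ℓ • K (ℓ - 2) + ν ℓ • K (ℓ - 1) + τ ℓ • Q (K (ℓ - 1))

theorem IsStabilizedRKStages.sModEq_stage_zero {R M : Type*} [Ring R] [AddCommGroup M]
    [Module R M] {Q : M → M} {s : ℕ} {τ₁ : R} {κ ν τ : ℕ → R} {K : ℕ → M}
    (hK : IsStabilizedRKStages Q s τ₁ κ ν τ K) (D : Submodule R M)
    (hQ : ∀ g, g ≡ K 0 [SMOD D] → Q g ≡ 0 [SMOD D]) :
    ∀ n ≤ s, K n ≡ K 0 [SMOD D]
  | 0, _ => .rfl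
  | 1, _ => by
    have hQ₀ : Q (K 0) ≡ 0 [SMOD D] := hQ _ .rfl
    calc
      K 1 = K 0 + τ₁ • Q (K 0) := hK.stage_one
      _ ≡ K 0 + τ₁ • 0 [SMOD D] := SModEq.rfl.add (hQ₀.smul τ₁)
      _ = K 0 := by rw [smul_zero, add_zero]
  | n + 2, hn => by
    have h₀ : K n ≡ K 0 [SMOD D] := hK.sModEq_stage_zero D hQ n (by lia)
    have h₁ : K (n + 1) ≡ K 0 [SMOD D] := hK.sModEq_stage_zero D hQ (n + 1) (by lia)
    have hκ : κ (n + 2) = 1 - ν (n + 2) := hK.κ_eq (n + 2) (by lia) hn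
    calc
      K (n + 2) = κ (n + 2) • K n + ν (n + 2) • K (n + 1) + τ (n + 2) • Q (K (n + 1)) :=
        hK.stage (n + 2) (by lia) hn
      _ ≡ κ (n + 2) • K 0 + ν (n + 2) • K 0 + τ (n + 2) • 0 [SMOD D] :=
        ((h₀.smul _).add (h₁.smul _)).add ((hQ _ h₁).smul _)
      _ = K 0 := by rw [hκ, ← add_smul, sub_add_cancel, one_smul, smul_zero, add_zero]

theorem summable_mul_of_hasFiniteSupport {ι R : Type*} [NonUnitalNonAssocSemiring R]
    [TopologicalSpace R] (w : ι → R) {g : ι → R} (hg : g.HasFiniteSupport) :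
    Summable fun j ↦ w j * g j :=
  summable_of_hasFiniteSupport (hg.mul_right w)

section ZeroMoment

variable {ι R : Type*} [CommRing R] [TopologicalSpace R] [IsTopologicalRing R]

/-- The finitely supported families whose moment against the weight `w` vanishes. The moment is
expressed by `HasSum`, so that it is additive without a separation axiom on `R`. -/
def zeroMoment (w : ι → R) : Submodule R (ι → R) where
  carrier := {g | g.HasFiniteSupport ∧ HasSum (fun j ↦ w j * g j) 0}
  zero_mem' := by simp [HasFiniteSupport, hasSum_zero]
  add_mem' := fun ⟨hf, hf₀⟩ ⟨hg, hg₀⟩ ↦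
    ⟨hf.add hg, by simpa only [Pi.add_apply, mul_add, add_zero] using hf₀.add hg₀⟩
  smul_mem' := fun c _ ⟨hg, hg₀⟩ ↦
    ⟨hg.smul_right fun _ ↦ c, by
      simpa only [Pi.smul_apply, smul_eq_mul, mul_left_comm, mul_zero] using hg₀.mul_left c⟩

variable {w f g : ι → R}

theorem mem_zeroMoment_of_tsum_eq_zero (hg : g.HasFiniteSupport)
    (hg₀ : ∑' j, w j * g j = 0) : g ∈ zeroMoment w :=
  ⟨hg, hg₀ ▸ (summable_mul_of_hasFiniteSupport w hg).hasSum⟩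

theorem hasFiniteSupport_of_sModEq_zeroMoment (hfg : f ≡ g [SMOD zeroMoment w])
    (hg : g.HasFiniteSupport) : f.HasFiniteSupport := by
  obtain ⟨hsub, -⟩ := SModEq.sub_mem.mp hfg
  simpa only [sub_add_cancel] using hsub.add hg

theorem tsum_mul_eq_of_sModEq_zeroMoment [T2Space R] (hfg : f ≡ g [SMOD zeroMoment w])
    (hg : g.HasFiniteSupport) : ∑' j, w j * f j = ∑' j, w j * g j := by
  obtain ⟨-, hsub⟩ := SModEq.sub_mem.mp hfg
  have hsum := hsub.add (summable_mul_of_hasFiniteSupport w hg).hasSum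
  simpa only [Pi.sub_apply, ← mul_add, sub_add_cancel, zero_add] using hsum.tsum_eq

theorem IsStabilizedRKStages.tsum_mul_eq [T2Space R] {Q : (ι → R) → ι → R} {s : ℕ} {τ₁ : R}
    {κ ν τ : ℕ → R} {K : ℕ → ι → R} (hK : IsStabilizedRKStages Q s τ₁ κ ν τ K)
    (hK₀ : (K 0).HasFiniteSupport)
    (hQfin : ∀ g : ι → R, g.HasFiniteSupport → (Q g).HasFiniteSupport)
    (hQw : ∀ g : ι → R, g.HasFiniteSupport → ∑' j, w j * Q g j = 0) :
    ∑' j, w j * K s j = ∑' j, w j * K 0 j := by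
  refine tsum_mul_eq_of_sModEq_zeroMoment (hK.sModEq_stage_zero _ (fun g hg ↦ ?_) s le_rfl) hK₀
  have hgfin : g.HasFiniteSupport := hasFiniteSupport_of_sModEq_zeroMoment hg hK₀
  exact SModEq.zero.mpr (mem_zeroMoment_of_tsum_eq_zero (hQfin g hgfin) (hQw g hgfin))

end ZeroMoment

theorem stmt9_general {ι : Type*} (v : ι → ℝ) {Q : (ι → ℝ) → ι → ℝ}
    (hQfin : ∀ g : ι → ℝ, g.HasFiniteSupport → (Q g).HasFiniteSupport)
    (hQmass : ∀ g : ι → ℝ, g.HasFiniteSupport → ∑' j, Q g j = 0)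
    (hQmom : ∀ g : ι → ℝ, g.HasFiniteSupport → ∑' j, v j * Q g j = 0)
    (hQen : ∀ g : ι → ℝ, g.HasFiniteSupport → ∑' j, v j ^ 2 * Q g j = 0)
    {s : ℕ} {τ₁ : ℝ} {κ ν τ : ℕ → ℝ} {K : ℕ → ι → ℝ}
    (hK : IsStabilizedRKStages Q s τ₁ κ ν τ K) (hK₀ : (K 0).HasFiniteSupport) :
    (∑' j, K s j = ∑' j, K 0 j) ∧
    (∑' j, v j * K s j = ∑' j, v j * K 0 j) ∧
    (∑' j, v j ^ 2 / 2 * K s j = ∑' j, v j ^ 2 / 2 * K 0 j) := by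
  refine ⟨?mass, hK.tsum_mul_eq hK₀ hQfin hQmom, ?energy⟩
  case mass =>
    simpa only [one_mul] using
      hK.tsum_mul_eq (w := fun _ ↦ 1) hK₀ hQfin (by simpa only [one_mul] using hQmass)
  case energy =>
    simpa only [div_mul_eq_mul_div, tsum_div_const] using
      congrArg (· / 2) (hK.tsum_mul_eq hK₀ hQfin hQen)

/-- One step of the first-order RKC method preserves the discrete mass, momentum
and kinetic energy, provided the discretized collision operator `Q` does. -/
theorem stmt9 (Δv : ℝ) (hΔv : 0 < Δv)
    (Q : (ℤ → ℝ) → (ℤ → ℝ))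
    (hQfin : ∀ g : ℤ → ℝ, (Function.support g).Finite → (Function.support (Q g)).Finite)
    (hQmass : ∀ g : ℤ → ℝ, (Function.support g).Finite → ∑' j : ℤ, Q g j = 0)
    (hQmom : ∀ g : ℤ → ℝ, (Function.support g).Finite →
      ∑' j : ℤ, vgrid Δv j * Q g j = 0)
    (hQen : ∀ g : ℤ → ℝ, (Function.support g).Finite →
      ∑' j : ℤ, vgrid Δv j ^ 2 * Q g j = 0)
    (s : ℕ) (hs : 2 ≤ s) (η : ℝ) (hη : 0 ≤ η) (Δt : ℝ)
    (ω₀ ω₁ μ₁ : ℝ) (μ ν κ : ℕ → ℝ)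
    (hω₀ : ω₀ = 1 + η / (s : ℝ) ^ 2)
    (hω₁ : ω₁ = chebT s ω₀ / chebT' s ω₀)
    (hμ₁ : μ₁ = ω₁ / ω₀)
    (hμ : ∀ ℓ : ℕ, 2 ≤ ℓ → ℓ ≤ s → μ ℓ = 2 * ω₁ * chebT (ℓ - 1) ω₀ / chebT ℓ ω₀)
    (hν : ∀ ℓ : ℕ, 2 ≤ ℓ → ℓ ≤ s → ν ℓ = 2 * ω₀ * chebT (ℓ - 1) ω₀ / chebT ℓ ω₀)
    (hκ : ∀ ℓ : ℕ, 2 ≤ ℓ → ℓ ≤ s → κ ℓ = 1 - ν ℓ)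
    (f0 : ℤ → ℝ) (hf0 : (Function.support f0).Finite)
    (K : ℕ → ℤ → ℝ)
    (hK0 : K 0 = f0)
    (hK1 : ∀ j : ℤ, K 1 j = K 0 j + μ₁ * Δt * Q (K 0) j)
    (hKl : ∀ ℓ : ℕ, 2 ≤ ℓ → ℓ ≤ s → ∀ j : ℤ,
      K ℓ j = κ ℓ * K (ℓ - 2) j + ν ℓ * K (ℓ - 1) j + μ ℓ * Δt * Q (K (ℓ - 1)) j)
    (f1 : ℤ → ℝ) (hf1 : f1 = K s) :
    (∑' j : ℤ, f1 j = ∑' j : ℤ, f0 j) ∧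
    (∑' j : ℤ, vgrid Δv j * f1 j = ∑' j : ℤ, vgrid Δv j * f0 j) ∧
    (∑' j : ℤ, (vgrid Δv j ^ 2 / 2) * f1 j = ∑' j : ℤ, (vgrid Δv j ^ 2 / 2) * f0 j) := by
  subst hf1 hK0
  exact stmt9_general (τ := fun ℓ ↦ μ ℓ * Δt) (vgrid Δv) hQfin hQmass hQmom hQen
    ⟨funext hK1, hκ, fun ℓ hℓ hℓs ↦ funext (hKl ℓ hℓ hℓs)⟩ hf0

end
end

section
/- Let N_x be a positive integer, Δx, Δv, Δt > 0, ν ∈ ℝ, and v_j = j·Δv. Let fⁿ, f⁽²⁾, Q⁽²⁾, G : (ℤ/N_xℤ) × ℤ → ℝ be grid functions that, for each fixed spatial index i, are finitely supported in the velocity index j, where G plays the role of the discrete spatial derivative D_x f⁽²⁾. Assume: (i) ∑_{i} G_{ij} = 0 for every j (periodicity of the spatial difference operator); (ii) Δv·∑_{j} v_j² Q⁽²⁾_{ij} = 0 for every i (energy conservation of the collision discretization); (iii) the velocity derivative is discretized by the centered difference (D_v f⁽²⁾)_{ij} = (f⁽²⁾_{i,j+1} − f⁽²⁾_{i,j−1})/(2Δv).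 Let Eⁿ : ℤ/N_xℤ → ℝ and define E^{n+1}_i = Eⁿ_i − Δt·Δv·∑_{j} v_j f⁽²⁾_{ij} (discrete Ampère update), E⁽²⁾_i = (Eⁿ_i + E^{n+1}_i)/2, and f^{n+1}_{ij} = fⁿ_{ij} + Δt·(−v_j G_{ij} − E⁽²⁾_i (D_v f⁽²⁾)_{ij} + ν Q⁽²⁾_{ij}). Define the discrete kinetic energy 𝓔ⁿ_kin = (Δx·Δv/2)·∑_{i,j} v_j² fⁿ_{ij} and similarly 𝓔^{n+1}_kin for f^{n+1}. Then the total discrete energy is exactly conserved: 𝓔^{n+1}_kin + (Δx/2)·∑_i (E^{n+1}_i)² = 𝓔ⁿ_kin + (Δx/2)·∑_i (Eⁿ_i)². -/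
noncomputable section

/-!
Testing the velocity flux against `v²` and summing by parts turns the centered difference into
`-2 ∑ v f`, exactly, because `(v - Δv)² - (v + Δv)² = -4 v Δv`. Hence in each cell the field changes
the kinetic energy by a multiple of `E⁽²⁾` times the current `Δv ∑ v f`. The Ampère update changes
`E²` by `(E' - E)(E' + E)`, which is the opposite amount because `E⁽²⁾` is the average of `E` and
`E'`. What is left in each cell is the transport flux, and it disappears on summing over space.
-/

/-- The centered difference quotient `(D_v g)_j = (g_{j+1} - g_{j-1}) / (2Δv)`, the discrete
velocity derivative of a grid function `g`; for `Δv = 0` it takes the junk value `0`. -/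
def centeredDiff (Δv : ℝ) (g : ℤ → ℝ) (j : ℤ) : ℝ := (g (j + 1) - g (j - 1)) / (2 * Δv)

theorem summable_mul_of_finite_support {α R : Type*} [NonUnitalNonAssocSemiring R]
    [TopologicalSpace R] (w : α → R) {g : α → R} (hg : (Function.support g).Finite) :
    Summable fun a => w a * g a :=
  summable_of_hasFiniteSupport (hg.subset (Function.support_mul_subset_right w g))

theorem sum_tsum_mul_eq_zero_of_sum_eq_zero {ι α R : Type*} [Fintype ι]
    [NonUnitalNonAssocSemiring R] [TopologicalSpace R] [ContinuousAdd R] [T2Space R]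
    (w : α → R) {g : ι → α → R} (hsummable : ∀ i, Summable fun a => w a * g i a)
    (hsum : ∀ a, ∑ i, g i a = 0) :
    ∑ i, ∑' a, w a * g i a = 0 := by
  rw [← Summable.tsum_finsetSum fun i _ => hsummable i]
  simp [← Finset.mul_sum, hsum]

theorem hasSum_mul_shift_sub_shift {α R : Type*} [AddGroup α] [NonUnitalNonAssocRing R]
    [TopologicalSpace R] [IsTopologicalAddGroup R] (h : α) {w g : α → R} {A B : R}
    (hA : HasSum (fun a => w (a - h) * g a) A) (hB : HasSum (fun a => w (a + h) * g a) B) :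
    HasSum (fun a => w a * (g (a + h) - g (a - h))) (A - B) := by
  have hA_shift : HasSum (fun a => w a * g (a + h)) A := by
    simpa [Function.comp_def] using (Equiv.addRight h).hasSum_iff.mpr hA
  have hB_shift : HasSum (fun a => w a * g (a - h)) B := by
    simpa [Function.comp_def] using (Equiv.subRight h).hasSum_iff.mpr hB
  simpa only [mul_sub] using hA_shift.sub hB_shift

theorem summable_intCast_pow_mul_of_le {g : ℤ → ℝ} {m n : ℕ} (hmn : m ≤ n)
    (hg : Summable fun j : ℤ => (j : ℝ) ^ n * g j) :
    Summable fun j : ℤ => (j : ℝ) ^ m * g j := by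
  refine hg.norm.of_norm_bounded_eventually ?_
  filter_upwards [(Set.finite_singleton (0 : ℤ)).compl_mem_cofinite] with j hj
  have one_le_abs_cast : (1 : ℝ) ≤ |(j : ℝ)| := by exact_mod_cast Int.one_le_abs hj
  simp only [norm_mul, norm_pow, Real.norm_eq_abs]
  gcongr

section Velocity

variable {Δv : ℝ}

theorem vgrid_add_one (j : ℤ) : vgrid Δv (j + 1) = vgrid Δv j + Δv := by
  simp only [vgrid, Int.cast_add, Int.cast_one]
  ring

theorem vgrid_sub_one (j : ℤ) : vgrid Δv (j - 1) = vgrid Δv j - Δv := by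
  simp only [vgrid, Int.cast_sub, Int.cast_one]
  ring

theorem summable_vgrid_pow_mul_of_le (hΔv : Δv ≠ 0) {g : ℤ → ℝ} {m n : ℕ} (hmn : m ≤ n)
    (hg : Summable fun j => vgrid Δv j ^ n * g j) :
    Summable fun j => vgrid Δv j ^ m * g j := by
  have factor (k : ℕ) (j : ℤ) : vgrid Δv j ^ k * g j = Δv ^ k * ((j : ℝ) ^ k * g j) := by
    rw [vgrid]
    ring
  simp only [factor, summable_mul_left_iff (pow_ne_zero _ hΔv)] at hg ⊢
  exact summable_intCast_pow_mul_of_le hmn hg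

theorem summable_vgrid_add_sq_mul (hΔv : Δv ≠ 0) {g : ℤ → ℝ}
    (hg : Summable fun j => vgrid Δv j ^ 2 * g j) (c : ℝ) :
    Summable fun j => (vgrid Δv j + c) ^ 2 * g j := by
  have hmoment (k : ℕ) (hk : k ≤ 2) := summable_vgrid_pow_mul_of_le hΔv hk hg
  refine ((hg.add ((hmoment 1 one_le_two).mul_left (2 * c))).add
    ((hmoment 0 zero_le_two).mul_left (c ^ 2))).congr fun j => ?_
  ring

theorem hasSum_vgrid_sq_mul_centeredDiff (hΔv : Δv ≠ 0) {g : ℤ → ℝ}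
    (hg : Summable fun j => vgrid Δv j ^ 2 * g j) :
    HasSum (fun j => vgrid Δv j ^ 2 * centeredDiff Δv g j)
      (-2 * ∑' j, vgrid Δv j * g j) := by
  have hsub : Summable fun j => vgrid Δv (j - 1) ^ 2 * g j := by
    simpa only [vgrid_sub_one, sub_eq_add_neg (vgrid Δv _)] using
      summable_vgrid_add_sq_mul hΔv hg (-Δv)
  have hadd : Summable fun j => vgrid Δv (j + 1) ^ 2 * g j := by
    simpa only [vgrid_add_one] using summable_vgrid_add_sq_mul hΔv hg Δv
  have by_parts : HasSum (fun j => vgrid Δv j ^ 2 * (g (j + 1) - g (j - 1)))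
      (∑' j, vgrid Δv (j - 1) ^ 2 * g j - ∑' j, vgrid Δv (j + 1) ^ 2 * g j) :=
    hasSum_mul_shift_sub_shift 1 (w := fun j => vgrid Δv j ^ 2) hsub.hasSum hadd.hasSum
  have weight_diff : ∑' j, vgrid Δv (j - 1) ^ 2 * g j - ∑' j, vgrid Δv (j + 1) ^ 2 * g j
      = -4 * Δv * ∑' j, vgrid Δv j * g j := by
    rw [← hsub.tsum_sub hadd, ← tsum_mul_left]
    refine tsum_congr fun j => ?_
    rw [vgrid_sub_one, vgrid_add_one]
    ring
  have rescale : -2 * ∑' j, vgrid Δv j * g j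
      = -4 * Δv * (∑' j, vgrid Δv j * g j) / (2 * Δv) := by
    field_simp
    ring
  rw [rescale, ← weight_diff]
  simpa only [centeredDiff, mul_div_assoc] using by_parts.div_const (2 * Δv)

theorem tsum_vgrid_sq_mul_update (hΔv : Δv ≠ 0) {f F Q G : ℤ → ℝ} (Δt ν E : ℝ)
    (hf : Summable fun j => vgrid Δv j ^ 2 * f j)
    (hG : Summable fun j => vgrid Δv j ^ 3 * G j)
    (hF : Summable fun j => vgrid Δv j ^ 2 * F j)
    (hQ : Summable fun j => vgrid Δv j ^ 2 * Q j) :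
    ∑' j, vgrid Δv j ^ 2 *
        (f j + Δt * (-(vgrid Δv j) * G j - E * centeredDiff Δv F j + ν * Q j)) =
      ∑' j, vgrid Δv j ^ 2 * f j
        + Δt * (-(∑' j, vgrid Δv j ^ 3 * G j) + 2 * E * ∑' j, vgrid Δv j * F j
          + ν * ∑' j, vgrid Δv j ^ 2 * Q j) := by
  have hrate := (hG.hasSum.neg.sub
    ((hasSum_vgrid_sq_mul_centeredDiff hΔv hF).mul_left E)).add (hQ.hasSum.mul_left ν)
  convert (hf.hasSum.add (hrate.mul_left Δt)).tsum_eq using 1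
  · congr 1
    funext j
    ring
  · ring

end Velocity

theorem stmt11_general {ι : Type*} [Fintype ι] (Δx Δv Δt ν : ℝ) (hΔv : Δv ≠ 0)
    (fn f2 Qc G : ι → ℤ → ℝ)
    (hfn : ∀ i, Summable fun j => vgrid Δv j ^ 2 * fn i j)
    (hf2 : ∀ i, Summable fun j => vgrid Δv j ^ 2 * f2 i j)
    (hQcsum : ∀ i, Summable fun j => vgrid Δv j ^ 2 * Qc i j)
    (hGsum : ∀ i, Summable fun j => vgrid Δv j ^ 3 * G i j)
    (hG : ∀ j, ∑ i, G i j = 0)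
    (hQc : ∀ i, Δv * ∑' j, vgrid Δv j ^ 2 * Qc i j = 0)
    (En Enp1 E2 : ι → ℝ)
    (hEnp1 : ∀ i, Enp1 i = En i - Δt * (Δv * ∑' j, vgrid Δv j * f2 i j))
    (hE2 : ∀ i, E2 i = (En i + Enp1 i) / 2)
    (fnp1 : ι → ℤ → ℝ)
    (hfnp1 : ∀ i j, fnp1 i j = fn i j
      + Δt * (-(vgrid Δv j) * G i j - E2 i * centeredDiff Δv (f2 i) j + ν * Qc i j)) :
    (Δx * Δv / 2) * ∑ i, ∑' j, vgrid Δv j ^ 2 * fnp1 i j + (Δx / 2) * ∑ i, Enp1 i ^ 2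
    = (Δx * Δv / 2) * ∑ i, ∑' j, vgrid Δv j ^ 2 * fn i j + (Δx / 2) * ∑ i, En i ^ 2 := by
  have cell_balance (i : ι) :
      Δv * ∑' j, vgrid Δv j ^ 2 * fnp1 i j + Enp1 i ^ 2
        = Δv * ∑' j, vgrid Δv j ^ 2 * fn i j + En i ^ 2
          - Δt * Δv * ∑' j, vgrid Δv j ^ 3 * G i j := by
    simp only [hfnp1]
    rw [tsum_vgrid_sq_mul_update hΔv Δt ν (E2 i) (hfn i) (hGsum i) (hf2 i) (hQcsum i), hE2, hEnp1]
    linear_combination Δt * ν * hQc i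
  have transport_cancels : ∑ i, ∑' j, vgrid Δv j ^ 3 * G i j = 0 :=
    sum_tsum_mul_eq_zero_of_sum_eq_zero _ hGsum hG
  have total_balance :
      Δv * ∑ i, ∑' j, vgrid Δv j ^ 2 * fnp1 i j + ∑ i, Enp1 i ^ 2
        = Δv * ∑ i, ∑' j, vgrid Δv j ^ 2 * fn i j + ∑ i, En i ^ 2 := by
    simpa only [Finset.sum_add_distrib, Finset.sum_sub_distrib, ← Finset.mul_sum,
      transport_cancels, mul_zero, sub_zero] using Fintype.sum_congr _ _ cell_balance
  linear_combination (Δx / 2) * total_balance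

/-- Exact conservation of the total discrete energy (kinetic + electric) for the
midpoint Runge–Kutta / Ampère scheme with the time-averaged electric field
`E⁽²⁾ = (Eⁿ + E^{n+1})/2`. -/
theorem stmt11 (Nx : ℕ) (hNx : 0 < Nx) (Δx Δv Δt ν : ℝ)
    (hΔx : 0 < Δx) (hΔv : 0 < Δv) (hΔt : 0 < Δt)
    (fn f2 Qc G : Fin Nx → ℤ → ℝ)
    (hfn : ∀ i, (Function.support (fn i)).Finite)
    (hf2 : ∀ i, (Function.support (f2 i)).Finite)
    (hQcfin : ∀ i, (Function.support (Qc i)).Finite)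
    (hGfin : ∀ i, (Function.support (G i)).Finite)
    (hG : ∀ j : ℤ, ∑ i : Fin Nx, G i j = 0)
    (hQc : ∀ i, Δv * ∑' j : ℤ, vgrid Δv j ^ 2 * Qc i j = 0)
    (En Enp1 E2 : Fin Nx → ℝ)
    (hEnp1 : ∀ i, Enp1 i = En i - Δt * (Δv * ∑' j : ℤ, vgrid Δv j * f2 i j))
    (hE2 : ∀ i, E2 i = (En i + Enp1 i) / 2)
    (fnp1 : Fin Nx → ℤ → ℝ)
    (hfnp1 : ∀ i j, fnp1 i j = fn i j
      + Δt * (-(vgrid Δv j) * G i j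
        - E2 i * ((f2 i (j + 1) - f2 i (j - 1)) / (2 * Δv))
        + ν * Qc i j)) :
    (Δx * Δv / 2) * ∑ i : Fin Nx, ∑' j : ℤ, vgrid Δv j ^ 2 * fnp1 i j
      + (Δx / 2) * ∑ i : Fin Nx, Enp1 i ^ 2
    = (Δx * Δv / 2) * ∑ i : Fin Nx, ∑' j : ℤ, vgrid Δv j ^ 2 * fn i j
      + (Δx / 2) * ∑ i : Fin Nx, En i ^ 2 := by
  exact stmt11_general Δx Δv Δt ν hΔv.ne' fn f2 Qc G
    (fun i => summable_mul_of_finite_support _ (hfn i))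
    (fun i => summable_mul_of_finite_support _ (hf2 i))
    (fun i => summable_mul_of_finite_support _ (hQcfin i))
    (fun i => summable_mul_of_finite_support _ (hGfin i))
    hG hQc En Enp1 E2 hEnp1 hE2 fnp1 hfnp1

end
end
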